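/- Let X be a topological space, Y ⊆ X, and n ∈ ℕ. Then Y is an n-difference of open sets if and only if Alternator does NOT win the n+1 round alternating game on Y, i.e. ¬ AltWins univ (altList Y (n+1)). -/

import Mathlib

/-- `AltWins U Xs` : Alternator wins the game `H_U(X_1,…,X_n)`. -/
def AltWins {X : Type*} [TopologicalSpace X] : Set X → List (Set X) → Prop
  | _, [] => True
  | U, A :: rest => ∃ x, x ∈ U ∩ A ∧
      ∀ V : Set X, IsOpen V → x ∈ V → V ⊆ U → AltWins V rest

/-- The list of length `m` alternating `Y, Yᶜ, Y, …` starting with `Y`. -/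
def altList {X : Type*} (Y : Set X) (m : ℕ) : List (Set X) :=
  (List.range m).map fun i => if i % 2 = 0 then Y else Yᶜ

/-- `Y` is an `n`-difference of open sets. -/
def IsNDiff {X : Type*} [TopologicalSpace X] (n : ℕ) (Y : Set X) : Prop :=
  ∃ A : ℕ → Set X, (∀ i, IsOpen (A i)) ∧ (∀ i j, i ≤ j → A i ⊆ A j) ∧
    ∀ x, x ∈ Y ↔ ∃ i, i < n ∧ x ∈ A i ∧ (∀ j, j < i → x ∉ A j) ∧ (n - i) % 2 = 1

/-!
Reading a play backwards, the points around which Alternator can still win `i` rounds form closed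
sets `F 0 = univ`, `F (i + 1) = closure (S i ∩ F i)`, where `S i` is the set (`Y` or `Yᶜ`) to be
hit when `i + 1` rounds remain; since membership in a closure is local, the ambient open set drops
out. On the other side, `n`-differences are described by decreasing closed sets `C 0 = univ`,
`C 1`, … such that `S i ∩ C i ⊆ C (i + 1)` for `i < n` and `C n` misses `Y`: take the complements of
the given open sets. The sequence `F` is the least candidate for `C`, so `Y` is an `n`-difference
iff `F n` misses `Y`, which is to say that Alternator has no winning first move.
-/

open Set

section Sets

variable {X : Type*}

/-- The set played in round `k` of the alternating game on `Y`, rounds being counted from `0`: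
`Y` for even `k` and `Yᶜ` for odd `k`, encoded by an equivalence so that membership is
propositional in `Y`. -/
def altSet (Y : Set X) (k : ℕ) : Set X := {x | x ∈ Y ↔ Even k}

theorem altSet_zero (Y : Set X) : altSet Y 0 = Y := by simp [altSet]

theorem notMem_altSet_iff {Y : Set X} {k : ℕ} {x : X} :
    x ∉ altSet Y k ↔ (x ∈ Y ↔ k % 2 = 1) := by
  rw [← Nat.odd_iff, ← Nat.not_even_iff_odd]
  simp only [altSet, mem_ofPred_eq]
  tauto

theorem altList_eq_map_altSet (Y : Set X) (m : ℕ) :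
    altList Y m = (List.range m).map (altSet Y) := by
  refine List.map_congr_left fun k _ => ?_
  ext x
  by_cases hk : k % 2 = 0 <;> simp [altSet, Nat.even_iff, hk]

theorem altList_succ_eq_reverse (Y : Set X) (n : ℕ) :
    altList Y (n + 1) = ((List.range (n + 1)).map fun i => altSet Y (n - i)).reverse := by
  rw [altList_eq_map_altSet]
  refine List.ext_getElem (by simp) fun k hk _ => ?_
  have hkn : k ≤ n := by simpa [Nat.lt_succ_iff] using hk
  simp [Nat.sub_sub_self hkn]

end Sets

theorem iff_exists_lt_first_and_iff {p r : ℕ → Prop} {q : Prop} {n : ℕ} :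
    (q ↔ ∃ i, i < n ∧ p i ∧ (∀ j, j < i → ¬ p j) ∧ r i) ↔
      (∀ i < n, p i → (∀ j < i, ¬ p j) → (q ↔ r i)) ∧ (q → ∃ i < n, p i) := by
  constructor
  · intro h
    refine ⟨fun i hin hi hfirst => ⟨fun hq => ?_, fun hr => ?_⟩, fun hq => ?_⟩
    · obtain ⟨k, -, hk, hkfirst, hr⟩ := h.mp hq
      have hki : k = i :=
        le_antisymm (not_lt.mp fun hlt => hkfirst i hlt hi) (not_lt.mp fun hlt => hfirst k hlt hk)
      exact hki ▸ hr
    · exact h.mpr ⟨i, hin, hi, hfirst, hr⟩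
    · obtain ⟨i, hin, hi, -⟩ := h.mp hq
      exact ⟨i, hin, hi⟩
  · rintro ⟨hr, hex⟩
    refine ⟨fun hq => ?_, fun ⟨i, hin, hi, hfirst, hri⟩ => (hr i hin hi hfirst).mpr hri⟩
    classical
    obtain ⟨hlt, hp⟩ := Nat.find_spec (hex hq)
    have hfirst : ∀ j < Nat.find (hex hq), ¬ p j := fun j hj hpj =>
      Nat.find_min (hex hq) hj ⟨hj.trans hlt, hpj⟩
    exact ⟨_, hlt, hp, hfirst, (hr _ hlt hp hfirst).mp hq⟩

/-- The sequence of residues (in the sense of Hausdorff's difference analysis) of the sets `S i`.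
The points of `hausdorffResidue S i` are those in all of whose neighbourhoods Alternator can win
the game on `S (i - 1), …, S 0`: indices run from the last round of the game to the first. -/
def hausdorffResidue {X : Type*} [TopologicalSpace X] (S : ℕ → Set X) : ℕ → Set X
  | 0 => univ
  | i + 1 => closure (S i ∩ hausdorffResidue S i)

section TopologicalSpace

variable {X : Type*} [TopologicalSpace X] {S : ℕ → Set X}

theorem isClosed_hausdorffResidue : ∀ i, IsClosed (hausdorffResidue S i)
  | 0 => isClosed_univ
  | _ + 1 => isClosed_closure

theorem hausdorffResidue_antitone : Antitone (hausdorffResidue S) :=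
  antitone_nat_of_succ_le fun i =>
    closure_minimal inter_subset_right (isClosed_hausdorffResidue i)

theorem hausdorffResidue_subset {C : ℕ → Set X} {n : ℕ} (hC : ∀ i, IsClosed (C i))
    (hzero : C 0 = univ) (hstep : ∀ i < n, S i ∩ C i ⊆ C (i + 1)) :
    hausdorffResidue S n ⊆ C n := by
  induction n with
  | zero => exact hzero.symm.subset
  | succ n ih =>
    have hn := ih fun i hi => hstep i (hi.trans n.lt_succ_self)
    exact closure_minimal ((inter_subset_inter_right _ hn).trans (hstep n n.lt_succ_self)) (hC _)

theorem mem_closure_iff_forall_isOpen_subset {U s : Set X} {x : X} (hU : IsOpen U) (hx : x ∈ U) :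
    x ∈ closure s ↔ ∀ V, IsOpen V → x ∈ V → V ⊆ U → (V ∩ s).Nonempty := by
  refine mem_closure_iff.trans ⟨fun h V hV hxV _ => h V hV hxV, fun h V hV hxV => ?_⟩
  exact (h (V ∩ U) (hV.inter hU) ⟨hxV, hx⟩ inter_subset_right).mono
    (inter_subset_inter_left _ inter_subset_left)

theorem altWins_reverse_map_range_iff {U : Set X} (hU : IsOpen U) (m : ℕ) :
    AltWins U ((List.range (m + 1)).map S).reverse ↔
      (U ∩ (S m ∩ hausdorffResidue S m)).Nonempty := by
  have hcons : ((List.range (m + 1)).map S).reverse = S m :: ((List.range m).map S).reverse := by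
    simp [List.range_succ]
  rw [hcons, AltWins, ← inter_assoc]
  refine exists_congr fun x => and_congr_right fun hx => ?_
  cases m with
  | zero => simp [AltWins, hausdorffResidue]
  | succ m =>
    rw [hausdorffResidue, mem_closure_iff_forall_isOpen_subset hU hx.1]
    exact forall₂_congr fun V hV => by rw [altWins_reverse_map_range_iff hV m]

theorem isNDiff_iff_exists_isClosed {Y : Set X} {n : ℕ} :
    IsNDiff n Y ↔ ∃ C : ℕ → Set X, (∀ i, IsClosed (C i)) ∧ Antitone C ∧ C 0 = univ ∧
      (∀ i < n, altSet Y (n - i) ∩ C i ⊆ C (i + 1)) ∧ Disjoint Y (C n) := by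
  constructor
  · rintro ⟨A, hA, -, hY⟩
    obtain ⟨hparity, hcover⟩ := forall_and.mp fun x => iff_exists_lt_first_and_iff.mp (hY x)
    refine ⟨fun i => ⋂ j < i, (A j)ᶜ, fun i => ?_, fun i k hik => ?_, by simp, ?_, ?_⟩
    · exact isClosed_biInter fun j _ => (hA j).isClosed_compl
    · exact biInter_subset_biInter_left fun j hj => Nat.lt_of_lt_of_le hj hik
    · rintro i hin x ⟨hxS, hxC⟩
      rw [mem_iInter₂] at hxC ⊢
      intro j hj
      rcases Nat.lt_succ_iff_lt_or_eq.mp hj with hji | rfl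
      · exact hxC j hji
      · exact fun hxA => notMem_altSet_iff.mpr (hparity x j hin hxA hxC) hxS
    · refine disjoint_left.mpr fun x hxY hxC => ?_
      obtain ⟨i, hin, hxA⟩ := hcover x hxY
      exact mem_iInter₂.mp hxC i hin hxA
  · rintro ⟨C, hC, hanti, hzero, hstep, hdisj⟩
    have hmem : ∀ x i, (∀ j < i, x ∉ (C (j + 1))ᶜ) → x ∈ C i
      | x, 0, _ => hzero ▸ mem_univ x
      | _, i + 1, h => not_notMem.mp (h i i.lt_succ_self)
    refine ⟨fun i => (C (i + 1))ᶜ, fun i => (hC _).isOpen_compl,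
      fun i j hij => compl_subset_compl.mpr (hanti (Nat.succ_le_succ hij)),
      fun x => iff_exists_lt_first_and_iff.mpr ⟨fun i hin hxA hfirst => ?_, fun hxY => ?_⟩⟩
    · exact notMem_altSet_iff.mp fun hxS => hxA (hstep i hin ⟨hxS, hmem x i hfirst⟩)
    · by_contra! h
      exact disjoint_left.mp hdisj hxY (hmem x n h)

theorem isNDiff_iff_disjoint_hausdorffResidue {Y : Set X} {n : ℕ} :
    IsNDiff n Y ↔ Disjoint Y (hausdorffResidue (fun i => altSet Y (n - i)) n) := by
  rw [isNDiff_iff_exists_isClosed]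
  constructor
  · rintro ⟨C, hC, -, hzero, hstep, hdisj⟩
    exact hdisj.mono_right (hausdorffResidue_subset hC hzero hstep)
  · exact fun hdisj => ⟨_, isClosed_hausdorffResidue, hausdorffResidue_antitone, rfl,
      fun _ _ => subset_closure, hdisj⟩

end TopologicalSpace

/-- `Y` is an `n`-difference of open sets iff Alternator loses the `(n+1)`-round
alternating game on `Y`. -/
theorem nDiff_iff_not_altWins {X : Type*} [TopologicalSpace X]
    (Y : Set X) (n : ℕ) :
    IsNDiff n Y ↔ ¬ AltWins (Set.univ : Set X) (altList Y (n + 1)) := by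
  rw [isNDiff_iff_disjoint_hausdorffResidue, altList_succ_eq_reverse,
    altWins_reverse_map_range_iff isOpen_univ, univ_inter, Nat.sub_self, altSet_zero,
    not_nonempty_iff_eq_empty, disjoint_iff_inter_eq_empty]
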